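/- For |q|<1, G(q^2)^2/(G(q)·H(q)^2) = G(q^5)·G(q^{10})^2 − q·H(q^5)·G(q^{10})^2 − 2q^3·H(q^5)·G(q^{10})·H(q^{10}) + q^4·G(q^5)·H(q^{10})^2. -/

import Mathlib

/-!
Write `θ_B(k) = ∑ (-1)^n q^(B n² + k n)`, a product of three `q`-Pochhammer symbols by the Jacobi
triple product. With modulus ten the left side is
`(q, q⁴, q⁶, q⁹; q¹⁰) (q³, q⁷; q¹⁰)²`, so after multiplication by `(q¹⁰; q¹⁰)⁴` it equals
`(θ₅(4) θ₅(2)) (θ₅(2) θ₅(1))`. In each of these two double series the terms are grouped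
along the sublattice of index five spanned by the orthogonal vectors `(1, -2)` and `(2, 1)`; this is
the `5`-dissection, and every component is a product of two theta functions of `Q = q⁵`
(`theta_dissections`).

With `a, b, c, d, e` the functions `θ₅(4), …, θ₅(0)` at `Q`, the four Rogers-Ramanujan products on
the right side are monomials in `a, b, c, d` and `(Q¹⁰; Q¹⁰)`. Multiplying the two dissections
and comparing coefficients, the component of `q²` cancels identically and the others reduce to
`a c e² + Q a² c² = b² d²`, `c³ e - Q² a³ c = b d³` and `a c³ + Q a³ e = b³ d`
(`theta_relations`). These are cases of the Weierstrass three-term relation, obtained by splitting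
each product of two theta series by the parity of the sum of the two indices.

The triple product (`triple_product`) is the limit, by dominated convergence, of its finite
form with `q`-binomial coefficients.
-/

noncomputable def qp (a q : ℂ) : ℂ := ∏' k : ℕ, (1 - a * q ^ k)

noncomputable def GG (q : ℂ) : ℂ := 1 / (qp q (q ^ 5) * qp (q ^ 4) (q ^ 5))

noncomputable def HH (q : ℂ) : ℂ := 1 / (qp (q ^ 2) (q ^ 5) * qp (q ^ 3) (q ^ 5))

noncomputable def RR (q : ℂ) : ℂ :=
  (qp q (q ^ 5) * qp (q ^ 4) (q ^ 5)) / (qp (q ^ 2) (q ^ 5) * qp (q ^ 3) (q ^ 5))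

noncomputable def phi (q : ℂ) : ℂ := ∑' n : ℤ, q ^ (n.natAbs ^ 2)

noncomputable def psi (q : ℂ) : ℂ := ∑' n : ℕ, q ^ (n * (n + 1) / 2)

open Filter Topology

/-! ### Infinite products -/

lemma qp_summable (a w : ℂ) (hw : ‖w‖ < 1) : Summable fun k : ℕ => ‖-(a * w ^ k)‖ := by
  simp only [norm_neg, norm_mul, norm_pow]
  exact (summable_geometric_of_lt_one (norm_nonneg _) hw).mul_left _

lemma qp_multipliable (a w : ℂ) (hw : ‖w‖ < 1) : Multipliable fun k : ℕ => (1 - a * w ^ k) := by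
  simpa [sub_eq_add_neg] using multipliable_one_add_of_summable (qp_summable a w hw)

lemma qp_tendsto (a w : ℂ) (hw : ‖w‖ < 1) :
    Tendsto (fun N => ∏ k ∈ Finset.range N, (1 - a * w ^ k)) atTop (𝓝 (qp a w)) :=
  (qp_multipliable a w hw).tendsto_prod_tprod_nat

lemma one_sub_mul_pow_ne {a w : ℂ} (ha : ‖a‖ < 1) (hw : ‖w‖ < 1) (k : ℕ) : 1 - a * w ^ k ≠ 0 := by
  intro h
  have h1 : a * w ^ k = 1 := (sub_eq_zero.mp h).symm
  have h2 : ‖a‖ * ‖w‖ ^ k = 1 := by rw [← norm_pow, ← norm_mul, h1, norm_one]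
  have h3 : ‖w‖ ^ k ≤ 1 := pow_le_one₀ (norm_nonneg _) hw.le
  nlinarith [norm_nonneg a]

lemma qp_ne_zero {a w : ℂ} (ha : ‖a‖ < 1) (hw : ‖w‖ < 1) : qp a w ≠ 0 := by
  have := tprod_one_add_ne_zero_of_summable (f := fun k : ℕ => -(a * w ^ k))
    (fun k => by simpa [sub_eq_add_neg] using one_sub_mul_pow_ne ha hw k) (qp_summable a w hw)
  simpa [qp, sub_eq_add_neg] using this

/-- Splitting a `q`-Pochhammer product according to the index modulo `m`. -/
lemma qp_split (m : ℕ) (hm : 0 < m) (a w : ℂ) (hw : ‖w‖ < 1) :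
    qp a w = ∏ i ∈ Finset.range m, qp (a * w ^ i) (w ^ m) := by
  have hwm : ‖w ^ m‖ < 1 := by
    rw [norm_pow]; exact pow_lt_one₀ (norm_nonneg _) hw hm.ne'
  have h1 : Tendsto (fun N => ∏ k ∈ Finset.range (m * N), (1 - a * w ^ k)) atTop (𝓝 (qp a w)) :=
    (qp_tendsto a w hw).comp (tendsto_id.const_mul_atTop' hm)
  have h2 : Tendsto (fun N => ∏ i ∈ Finset.range m, ∏ k ∈ Finset.range N,
      (1 - a * w ^ i * (w ^ m) ^ k)) atTop
      (𝓝 (∏ i ∈ Finset.range m, qp (a * w ^ i) (w ^ m))) :=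
    tendsto_finsetProd _ fun i _ => qp_tendsto _ _ hwm
  refine tendsto_nhds_unique h1 (h2.congr fun N => ?_)
  rw [Finset.prod_comm]
  induction N with
  | zero => simp
  | succ N ih =>
    rw [Finset.prod_range_succ, ih, Nat.mul_succ, Finset.prod_range_add]
    congr 1
    refine Finset.prod_congr rfl fun i _ => ?_
    ring

/-! ### The Jacobi triple product -/

/-- The finite product `(w; w)_M`. -/
noncomputable def qfac (w : ℂ) (M : ℕ) : ℂ := ∏ i ∈ Finset.range M, (1 - w * w ^ i)

/-- The reciprocal `1 / (w; w)_m`, extended by `0` to negative `m`. With this convention the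
recursion `rfac_pred` holds for every integer, so the finite triple product needs no separate
treatment of boundary terms. -/
noncomputable def rfac (w : ℂ) (m : ℤ) : ℂ := if m < 0 then 0 else (qfac w m.toNat)⁻¹

lemma qfac_ne_zero {w : ℂ} (hw : ‖w‖ < 1) (M : ℕ) : qfac w M ≠ 0 :=
  Finset.prod_ne_zero_iff.mpr fun i _ => one_sub_mul_pow_ne hw hw i

lemma rfac_pred {w : ℂ} (hw : ‖w‖ < 1) (m : ℤ) : rfac w (m - 1) = (1 - w ^ m) * rfac w m := by
  rcases lt_trichotomy m 0 with h | h | h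
  · simp [rfac, h, show m - 1 < 0 by omega]
  · subst h; simp [rfac]
  · obtain ⟨k, rfl⟩ : ∃ k : ℕ, m = k + 1 := ⟨(m - 1).toNat, by omega⟩
    have h1 : ¬ ((k : ℤ) + 1 < 0) := by omega
    have h2 : ((k : ℤ) + 1).toNat = k + 1 := by omega
    have h3 : (w : ℂ) ^ ((k : ℤ) + 1) = w * w ^ k := by
      rw [show ((k : ℤ) + 1) = ((k + 1 : ℕ) : ℤ) by push_cast; ring, zpow_natCast, pow_succ']
    have h4 := one_sub_mul_pow_ne hw hw k
    have h5 := qfac_ne_zero hw k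
    have h6 : qfac w (k + 1) = qfac w k * (1 - w * w ^ k) := Finset.prod_range_succ _ _
    simp only [rfac, add_sub_cancel_right, h1, if_false, h2, h3, h6, Int.toNat_natCast,
      show ¬ ((k : ℤ) < 0) by omega]
    field_simp

/-- The coefficient `(w; w)_{2N} / ((w; w)_{N-n} (w; w)_{N+n})` of the finite triple product. -/
noncomputable def jcoef (w : ℂ) (N : ℕ) (n : ℤ) : ℂ :=
  qfac w (2 * N) * rfac w (N - n) * rfac w (N + n)

lemma jcoef_succ {w : ℂ} (hw : ‖w‖ < 1) (hw0 : w ≠ 0) (N : ℕ) (n : ℤ) :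
    jcoef w (N + 1) n = (1 + w ^ (2 * N + 1)) * jcoef w N n
      + w ^ ((N : ℤ) + 1 - n) * jcoef w N (n - 1) + w ^ ((N : ℤ) + 1 + n) * jcoef w N (n + 1) := by
  set X := rfac w ((N : ℤ) + 1 - n) with hX
  set Y := rfac w ((N : ℤ) + 1 + n) with hY
  set A := w ^ ((N : ℤ) + 1 - n) with hA
  set B := w ^ ((N : ℤ) + 1 + n) with hB
  have hAB : A * B = w * w ^ (2 * N + 1) := by
    rw [hA, hB, ← zpow_add₀ hw0, ← pow_succ', ← zpow_natCast]
    congr 1; push_cast; ring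
  have hA' : w ^ ((N : ℤ) - n) = A / w := by
    rw [hA, div_eq_mul_inv, ← zpow_sub_one₀ hw0]; congr 1; ring
  have hB' : w ^ ((N : ℤ) + n) = B / w := by
    rw [hB, div_eq_mul_inv, ← zpow_sub_one₀ hw0]; congr 1; ring
  have e1 : rfac w ((N : ℤ) - n) = (1 - A) * X := by
    rw [← rfac_pred hw]; congr 1; ring
  have e2 : rfac w ((N : ℤ) + n) = (1 - B) * Y := by
    rw [← rfac_pred hw]; congr 1; ring
  have e3 : rfac w ((N : ℤ) - (n - 1)) = X := by rw [hX]; congr 1; ring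
  have e4 : rfac w ((N : ℤ) + (n - 1)) = (1 - B / w) * ((1 - B) * Y) := by
    rw [← e2, ← hB', ← rfac_pred hw]; congr 1; ring
  have e5 : rfac w ((N : ℤ) - (n + 1)) = (1 - A / w) * ((1 - A) * X) := by
    rw [← e1, ← hA', ← rfac_pred hw]; congr 1; ring
  have e6 : rfac w ((N : ℤ) + (n + 1)) = Y := by rw [hY]; congr 1; ring
  have e7 : qfac w (2 * (N + 1)) =
      qfac w (2 * N) * (1 - w ^ (2 * N + 1)) * (1 - w * w ^ (2 * N + 1)) := by
    rw [show 2 * (N + 1) = 2 * N + 1 + 1 by ring, qfac, Finset.prod_range_succ,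
      Finset.prod_range_succ, qfac, pow_succ' w (2 * N)]
  have e8 : w ^ (2 * N + 1) = A * B / w := by rw [hAB]; field_simp
  simp only [jcoef, e7, e1, e2, e3, e4, e5, e6, e8]
  push_cast
  rw [← hX, ← hY]
  field_simp
  ring

lemma qfac_bdd {w : ℂ} (hw : ‖w‖ < 1) : ∃ C, 0 ≤ C ∧ ∀ M, ‖qfac w M‖ ≤ C := by
  obtain ⟨C, hC⟩ := (Metric.isBounded_range_of_tendsto _ (qp_tendsto w w hw)).exists_norm_le
  exact ⟨C, (norm_nonneg _).trans (hC _ ⟨0, rfl⟩), fun M => hC _ ⟨M, rfl⟩⟩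

lemma rfac_tendsto {w : ℂ} (hw : ‖w‖ < 1) :
    Tendsto (fun M : ℕ => (qfac w M)⁻¹) atTop (𝓝 (qp w w)⁻¹) :=
  (qp_tendsto w w hw).inv₀ (qp_ne_zero hw hw)

lemma rfac_bdd {w : ℂ} (hw : ‖w‖ < 1) : ∃ C, 0 ≤ C ∧ ∀ m, ‖rfac w m‖ ≤ C := by
  obtain ⟨C, hC⟩ := (Metric.isBounded_range_of_tendsto _ (rfac_tendsto hw)).exists_norm_le
  have h0 : 0 ≤ C := (norm_nonneg _).trans (hC _ ⟨0, rfl⟩)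
  refine ⟨C, h0, fun m => ?_⟩
  unfold rfac
  split_ifs
  · simpa using h0
  · exact hC _ ⟨m.toNat, rfl⟩

lemma jcoef_bdd {w : ℂ} (hw : ‖w‖ < 1) : ∃ C, ∀ N n, ‖jcoef w N n‖ ≤ C := by
  obtain ⟨C, hC0, hC⟩ := qfac_bdd hw
  obtain ⟨D, hD0, hD⟩ := rfac_bdd hw
  refine ⟨C * D * D, fun N n => ?_⟩
  rw [jcoef, norm_mul, norm_mul]
  gcongr
  · exact hC _
  · exact hD _
  · exact hD _

lemma jcoef_tendsto {w : ℂ} (hw : ‖w‖ < 1) (n : ℤ) :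
    Tendsto (fun N => jcoef w N n) atTop (𝓝 (qp w w)⁻¹) := by
  have h1 : Tendsto (fun N : ℕ => qfac w (2 * N)) atTop (𝓝 (qp w w)) :=
    (qp_tendsto w w hw).comp (tendsto_id.const_mul_atTop' two_pos)
  have key : ∀ n : ℤ, Tendsto (fun N : ℕ => rfac w (N + n)) atTop (𝓝 (qp w w)⁻¹) := by
    intro n
    have h2 : Tendsto (fun N : ℕ => ((N : ℤ) + n).toNat) atTop atTop := by
      refine tendsto_atTop.mpr fun b => ?_
      filter_upwards [eventually_ge_atTop (b + n.natAbs)] with N hN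
      omega
    refine ((rfac_tendsto hw).comp h2).congr' ?_
    filter_upwards [eventually_ge_atTop n.natAbs] with N hN
    simp [rfac, show ¬ ((N : ℤ) + n < 0) by omega]
  have h3 := (h1.mul (key (-n))).mul (key n)
  have hne := qp_ne_zero hw hw
  rw [mul_inv_cancel₀ hne, one_mul] at h3
  simpa only [jcoef, sub_eq_add_neg] using h3

/-- The Jacobi triple product. The hypotheses on `t` say that
`t n = (-1) ^ n * w ^ (n * (n - 1) / 2) * u ^ n`, expressed through its two-sided recursion. -/
lemma triple_product {w u v : ℂ} (hw : ‖w‖ < 1) (hw0 : w ≠ 0) (huv : u * v = w) {t : ℤ → ℂ}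
    (ht0 : t 0 = 1) (ht : Summable fun n => ‖t n‖)
    (hu : ∀ n, t (n - 1) * u = -(t n * w ^ (1 - n)))
    (hv : ∀ n, t (n + 1) * v = -(t n * w ^ (1 + n))) :
    ∑' n, t n = qp w w * (qp u w * qp v w) := by
  obtain ⟨C, hC⟩ := jcoef_bdd hw
  have hbd : ∀ N n, ‖t n * jcoef w N n‖ ≤ ‖t n‖ * C := fun N n => by
    rw [norm_mul]; gcongr; exact hC N n
  have hsum : ∀ N, Summable fun n => t n * jcoef w N n := fun N =>
    Summable.of_norm_bounded (ht.mul_right C) (hbd N)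
  have fin : ∀ N : ℕ, ∑' n, t n * jcoef w N n =
      (∏ k ∈ Finset.range N, (1 - u * w ^ k)) * ∏ k ∈ Finset.range N, (1 - v * w ^ k) := by
    intro N
    induction N with
    | zero =>
      rw [tsum_eq_single 0]
      · simp [jcoef, qfac, rfac, ht0]
      · intro n hn
        rcases lt_or_gt_of_ne hn with h | h
        · simp [jcoef, rfac, h]
        · simp [jcoef, rfac, h]
    | succ N ih =>
      have s1 : ∑' n, t n * (w ^ ((N : ℤ) + 1 - n) * jcoef w N (n - 1))
          = -(u * w ^ N) * ∑' n, t n * jcoef w N n := by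
        rw [← (Equiv.subRight (1 : ℤ)).tsum_eq (fun n => t n * jcoef w N n), ← tsum_mul_left]
        refine tsum_congr fun n => ?_
        have := hu n
        rw [show (N : ℤ) + 1 - n = N + (1 - n) by ring, zpow_add₀ hw0, zpow_natCast]
        simp only [Equiv.subRight_apply]
        linear_combination (w ^ N * jcoef w N (n - 1)) * this
      have s2 : ∑' n, t n * (w ^ ((N : ℤ) + 1 + n) * jcoef w N (n + 1))
          = -(v * w ^ N) * ∑' n, t n * jcoef w N n := by
        rw [← (Equiv.addRight (1 : ℤ)).tsum_eq (fun n => t n * jcoef w N n), ← tsum_mul_left]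
        refine tsum_congr fun n => ?_
        have := hv n
        rw [show (N : ℤ) + 1 + n = N + (1 + n) by ring, zpow_add₀ hw0, zpow_natCast]
        simp only [Equiv.coe_addRight]
        linear_combination (w ^ N * jcoef w N (n + 1)) * this
      have m1 : Summable fun n => t n * (w ^ ((N : ℤ) + 1 - n) * jcoef w N (n - 1)) := by
        have := ((Equiv.subRight (1 : ℤ)).summable_iff.mpr (hsum N)).mul_left (-(u * w ^ N))
        refine this.congr fun n => ?_
        have := hu n
        rw [show (N : ℤ) + 1 - n = N + (1 - n) by ring, zpow_add₀ hw0, zpow_natCast]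
        simp only [Function.comp, Equiv.subRight_apply]
        linear_combination (-w ^ N * jcoef w N (n - 1)) * this
      have m2 : Summable fun n => t n * (w ^ ((N : ℤ) + 1 + n) * jcoef w N (n + 1)) := by
        have := ((Equiv.addRight (1 : ℤ)).summable_iff.mpr (hsum N)).mul_left (-(v * w ^ N))
        refine this.congr fun n => ?_
        have := hv n
        rw [show (N : ℤ) + 1 + n = N + (1 + n) by ring, zpow_add₀ hw0, zpow_natCast]
        simp only [Function.comp, Equiv.coe_addRight]
        linear_combination (-w ^ N * jcoef w N (n + 1)) * this
      have hstep : ∀ n, t n * jcoef w (N + 1) n = ((1 + w ^ (2 * N + 1)) * (t n * jcoef w N n)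
          + t n * (w ^ ((N : ℤ) + 1 - n) * jcoef w N (n - 1)))
          + t n * (w ^ ((N : ℤ) + 1 + n) * jcoef w N (n + 1)) := fun n => by
        rw [jcoef_succ hw hw0]; ring
      have m0 := (hsum N).mul_left (1 + w ^ (2 * N + 1))
      rw [tsum_congr hstep, (m0.add m1).tsum_add m2, m0.tsum_add m1, tsum_mul_left, s1, s2, ih,
        Finset.prod_range_succ, Finset.prod_range_succ]
      generalize ∏ k ∈ Finset.range N, (1 - u * w ^ k) = P
      generalize ∏ k ∈ Finset.range N, (1 - v * w ^ k) = P'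
      rw [pow_succ' w (2 * N), ← huv]
      ring
  have lim1 : Tendsto (fun N => ∑' n, t n * jcoef w N n) atTop
      (𝓝 (∑' n, t n * (qp w w)⁻¹)) :=
    tendsto_tsum_of_dominated_convergence (ht.mul_right C)
      (fun n => (jcoef_tendsto hw n).const_mul (t n)) (Eventually.of_forall hbd)
  have lim2 := (qp_tendsto u w hw).mul (qp_tendsto v w hw)
  have h := tendsto_nhds_unique (lim1.congr fin) lim2
  rw [tsum_mul_right] at h
  have hne := qp_ne_zero hw hw
  rw [← h]
  field_simp

/-! ### Theta series and rearrangement of their products -/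

/-- The theta series `∑ ε ^ n q ^ (B n² + k n)` over all integers `n`; it is used with `ε = ±1`.
Exponents are integral throughout, so all shifts are by integral powers of `q`. -/
noncomputable def th (ε q : ℂ) (B k : ℤ) : ℂ := ∑' n : ℤ, ε ^ n * q ^ (B * n ^ 2 + k * n)

lemma th_summable {ε q : ℂ} (hε : ‖ε‖ = 1) (hq : ‖q‖ < 1) (hq0 : q ≠ 0) {B : ℤ} (hB : 0 < B)
    (k : ℤ) : Summable fun n : ℤ => ‖ε ^ n * q ^ (B * n ^ 2 + k * n)‖ := by
  have hr0 : 0 < ‖q‖ := norm_pos_iff.mpr hq0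
  have hg : Summable fun n : ℤ => ‖q‖ ^ (|n| - (|k| + 1) ^ 2) := by
    have h : Summable fun n : ℤ => ‖q‖ ^ |n| := by
      refine summable_int_iff_summable_nat_and_neg.mpr ⟨?_, ?_⟩ <;>
      simpa using summable_geometric_of_lt_one (norm_nonneg _) hq
    refine (h.mul_right (‖q‖ ^ ((|k| + 1) ^ 2))⁻¹).congr fun n => ?_
    rw [← div_eq_mul_inv, zpow_sub₀ hr0.ne']
  refine Summable.of_nonneg_of_le (fun _ => norm_nonneg _) (fun n => ?_) hg
  rw [norm_mul, norm_zpow, norm_zpow, hε, one_zpow, one_mul]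
  refine zpow_le_zpow_right_of_le_one₀ hr0 hq.le ?_
  have h1 : -(|k| * |n|) ≤ k * n := by rw [← abs_mul]; exact neg_abs_le _
  have h2 : n ^ 2 = |n| ^ 2 := (sq_abs n).symm
  rw [h2]
  nlinarith [sq_nonneg (|n| - (|k| + 1)), abs_nonneg n, abs_nonneg k, sq_nonneg |n|,
    mul_nonneg (abs_nonneg n) (abs_nonneg k)]

lemma th_neg (q : ℂ) {ε : ℂ} (hε : ε * ε = 1) (B k : ℤ) : th ε q B (-k) = th ε q B k := by
  have h : ε⁻¹ = ε := inv_eq_of_mul_eq_one_left hε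
  unfold th
  rw [← (Equiv.neg ℤ).tsum_eq]
  refine tsum_congr fun n => ?_
  rw [Equiv.neg_apply, zpow_neg, ← inv_zpow, h]
  congr 2; ring

/-- Quasi-periodicity of the theta series. -/
lemma th_shift {q : ℂ} (hq0 : q ≠ 0) {ε : ℂ} (hε : ε * ε = 1) (B k : ℤ) :
    th ε q B (k + 2 * B) = ε * q ^ (-(B + k)) * th ε q B k := by
  have h : ε⁻¹ = ε := inv_eq_of_mul_eq_one_left hε
  have h0 : ε ≠ 0 := left_ne_zero_of_mul_eq_one hε
  unfold th
  rw [← (Equiv.subRight (1 : ℤ)).tsum_eq, ← tsum_mul_left]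
  refine tsum_congr fun n => ?_
  rw [Equiv.subRight_apply, zpow_sub_one₀ h0, h,
    show B * (n - 1) ^ 2 + (k + 2 * B) * (n - 1) = -(B + k) + (B * n ^ 2 + k * n) by ring,
    zpow_add₀ hq0]
  ring

lemma th_pow (q ε : ℂ) (m : ℕ) (B k : ℤ) : th ε (q ^ m) B k = th ε q (m * B) (m * k) := by
  unfold th
  refine tsum_congr fun n => ?_
  rw [← zpow_natCast, ← zpow_mul]
  congr 2; ring

/-- Splitting a double series along the classes of a finite-index sublattice of `ℤ × ℤ`. -/
lemma tsum_split {N : ℕ} (e : Fin N × (ℤ × ℤ) ≃ ℤ × ℤ) {f : ℤ × ℤ → ℂ} (hf : Summable f) :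
    ∑' x, f x = ∑ u : Fin N, ∑' y : ℤ × ℤ, f (e (u, y)) := by
  have h : Summable fun x => f (e x) := e.summable_iff.mpr hf
  rw [← e.tsum_eq, h.tsum_prod, tsum_fintype]

/-- `(u, s, t) ↦ (s + 2 t, -2 s + t + u)`: the lattice spanned by the orthogonal vectors
`(1, -2)` and `(2, 1)` has index `5`. -/
def lattice5 : Fin 5 × (ℤ × ℤ) ≃ ℤ × ℤ where
  toFun x := (x.2.1 + 2 * x.2.2, -2 * x.2.1 + x.2.2 + (x.1 : ℕ))
  invFun y := (⟨((2 * y.1 + y.2) % 5).toNat, by omega⟩,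
    ((y.1 - 2 * y.2 + 2 * ((2 * y.1 + y.2) % 5)) / 5, (2 * y.1 + y.2) / 5))
  left_inv := by
    rintro ⟨⟨u, hu⟩, s, t⟩
    simp only [Prod.mk.injEq, Fin.mk.injEq]
    omega
  right_inv := by
    rintro ⟨m, n⟩
    simp only [Prod.mk.injEq]
    omega

/-- `(u, s, t) ↦ (s + t + u, s - t)`: the lattice spanned by the orthogonal vectors
`(1, 1)` and `(1, -1)` has index `2`. -/
def lattice2 : Fin 2 × (ℤ × ℤ) ≃ ℤ × ℤ where
  toFun x := (x.2.1 + x.2.2 + (x.1 : ℕ), x.2.1 - x.2.2)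
  invFun y := (⟨((y.1 + y.2) % 2).toNat, by omega⟩,
    ((y.1 + y.2) / 2, (y.1 - y.2) / 2))
  left_inv := by
    rintro ⟨⟨u, hu⟩, s, t⟩
    simp only [Prod.mk.injEq, Fin.mk.injEq]
    omega
  right_inv := by
    rintro ⟨m, n⟩
    simp only [Prod.mk.injEq]
    omega

lemma th_mul_th {ε ε' q : ℂ} (hε : ‖ε‖ = 1) (hε' : ‖ε'‖ = 1) (hq : ‖q‖ < 1) (hq0 : q ≠ 0)
    {B : ℤ} (hB : 0 < B) (k l : ℤ) :
    th ε q B k * th ε' q B l = ∑' x : ℤ × ℤ, (ε ^ x.1 * q ^ (B * x.1 ^ 2 + k * x.1)) *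
      (ε' ^ x.2 * q ^ (B * x.2 ^ 2 + l * x.2)) :=
  tsum_mul_tsum_of_summable_norm (th_summable hε hq hq0 hB k) (th_summable hε' hq hq0 hB l)

lemma neg_one_zpow_congr {a b c : ℤ} (h : a = b + 2 * c) : (-1 : ℂ) ^ a = (-1) ^ b := by
  rw [h, zpow_add₀ (by norm_num), zpow_mul]
  simp

lemma th_mul_split5 {q : ℂ} (hq : ‖q‖ < 1) (hq0 : q ≠ 0) {B : ℤ} (hB : 0 < B) (k l : ℤ) :
    th (-1) q B k * th (-1) q B l = ∑ u : Fin 5, (-1) ^ ((u : ℕ) : ℤ) *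
      q ^ (B * ((u : ℕ) : ℤ) ^ 2 + l * (u : ℕ)) *
      (th (-1) q (5 * B) (k - 2 * l - 4 * B * (u : ℕ)) *
        th (-1) q (5 * B) (2 * k + l + 2 * B * (u : ℕ))) := by
  have h1 : ‖(-1 : ℂ)‖ = 1 := by simp
  rw [th_mul_th h1 h1 hq hq0 hB, tsum_split lattice5 (summable_mul_of_summable_norm
    (th_summable h1 hq hq0 hB k) (th_summable h1 hq hq0 hB l))]
  refine Finset.sum_congr rfl fun u _ => ?_
  rw [th_mul_th h1 h1 hq hq0 (by omega : 0 < 5 * B), ← tsum_mul_left]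
  refine tsum_congr fun x => ?_
  obtain ⟨s, t⟩ := x
  simp only [lattice5, Equiv.coe_fn_mk]
  generalize ((u : ℕ) : ℤ) = u
  have e1 : (-1 : ℂ) ^ (s + 2 * t) * (-1) ^ (-2 * s + t + u)
      = (-1) ^ u * ((-1) ^ s * (-1) ^ t) := by
    rw [← zpow_add₀ (by norm_num), ← zpow_add₀ (by norm_num), ← zpow_add₀ (by norm_num)]
    exact neg_one_zpow_congr (c := t - s) (by ring)
  have e2 : q ^ (B * (s + 2 * t) ^ 2 + k * (s + 2 * t)) *
      q ^ (B * (-2 * s + t + u) ^ 2 + l * (-2 * s + t + u)) =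
      q ^ (B * u ^ 2 + l * u) * (q ^ (5 * B * s ^ 2 + (k - 2 * l - 4 * B * u) * s) *
        q ^ (5 * B * t ^ 2 + (2 * k + l + 2 * B * u) * t)) := by
    rw [← zpow_add₀ hq0, ← zpow_add₀ hq0, ← zpow_add₀ hq0]
    congr 1; ring
  rw [mul_mul_mul_comm, e1, e2]
  ring

lemma th_mul_split2 {q : ℂ} (hq : ‖q‖ < 1) (hq0 : q ≠ 0) {B : ℤ} (hB : 0 < B) (k l : ℤ) :
    th (-1) q B k * th (-1) q B l = th 1 q (2 * B) (k + l) * th 1 q (2 * B) (k - l)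
      - q ^ (B + k) * (th 1 q (2 * B) (2 * B + k + l) * th 1 q (2 * B) (2 * B + k - l)) := by
  have h1 : ‖(-1 : ℂ)‖ = 1 := by simp
  have h1' : ‖(1 : ℂ)‖ = 1 := by simp
  have hB2 : 0 < 2 * B := by omega
  rw [th_mul_th h1 h1 hq hq0 hB, tsum_split lattice2 (summable_mul_of_summable_norm
    (th_summable h1 hq hq0 hB k) (th_summable h1 hq hq0 hB l)), Fin.sum_univ_two, sub_eq_add_neg,
    ← neg_mul, th_mul_th h1' h1' hq hq0 hB2, th_mul_th h1' h1' hq hq0 hB2, ← tsum_mul_left]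
  congr 1
  · refine tsum_congr fun x => ?_
    obtain ⟨s, t⟩ := x
    simp only [lattice2, Equiv.coe_fn_mk, Fin.val_zero, Nat.cast_zero, add_zero, one_zpow, one_mul]
    rw [mul_mul_mul_comm, ← zpow_add₀ (by norm_num), ← zpow_add₀ hq0, ← zpow_add₀ hq0,
      neg_one_zpow_congr (b := 0) (c := s) (by ring), zpow_zero, one_mul]
    congr 1; ring
  · refine tsum_congr fun x => ?_
    obtain ⟨s, t⟩ := x
    simp only [lattice2, Equiv.coe_fn_mk, Fin.val_one, Nat.cast_one, one_zpow, one_mul]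
    rw [mul_mul_mul_comm, ← zpow_add₀ (by norm_num), ← zpow_add₀ hq0, ← zpow_add₀ hq0,
      neg_one_zpow_congr (b := 1) (c := s) (by ring), zpow_one, neg_mul, neg_mul, ← zpow_add₀ hq0,
      one_mul]
    congr 2; ring

/-- The product form of the alternating theta series. -/
lemma th_prod {q : ℂ} (hq : ‖q‖ < 1) (hq0 : q ≠ 0) {B k m l : ℕ} (hB : 0 < B) (hm : m = B + k)
    (hl : l + k = B) :
    th (-1) q B k = qp (q ^ (2 * B)) (q ^ (2 * B)) *
      (qp (q ^ m) (q ^ (2 * B)) * qp (q ^ l) (q ^ (2 * B))) := by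
  have hz : ∀ n : ℕ, q ^ n = q ^ (n : ℤ) := fun n => (zpow_natCast q n).symm
  have hm1 : (-1 : ℂ) ≠ 0 := by norm_num
  have hl' : (l : ℤ) = B - k := by omega
  refine triple_product ?_ (pow_ne_zero _ hq0) ?_ (by simp)
    (th_summable (by simp) hq hq0 (by omega) k) ?_ ?_
  · rw [norm_pow]; exact pow_lt_one₀ (norm_nonneg _) hq (by omega)
  · rw [← pow_add]; congr 1; omega
  · intro n
    rw [hz, hz, ← zpow_mul, mul_assoc, mul_assoc, ← zpow_add₀ hq0, ← zpow_add₀ hq0,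
      zpow_sub_one₀ hm1, hm]
    push_cast
    rw [show (B : ℤ) * (n - 1) ^ 2 + k * (n - 1) + (B + k) = B * n ^ 2 + k * n + 2 * B * (1 - n)
      by ring]
    norm_num
  · intro n
    rw [hz, hz, ← zpow_mul, mul_assoc, mul_assoc, ← zpow_add₀ hq0, ← zpow_add₀ hq0,
      zpow_add_one₀ hm1, hl']
    push_cast
    rw [show (B : ℤ) * (n + 1) ^ 2 + k * (n + 1) + (B - k) = B * n ^ 2 + k * n + 2 * B * (1 + n)
      by ring]
    norm_num

/-! ### Theta identities of modulus ten -/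

/-- Three relations between the modulus-ten theta functions. Each is an instance of the Weierstrass
three-term relation: after splitting every product of two thetas by parity, both sides become the
same polynomial in `∑ Q ^ (10 n² + k n)` for `k = 0, 2, 4, 6, 8, 10`. -/
lemma theta_relations {Q a b c d e : ℂ} (hQ : ‖Q‖ < 1) (hQ0 : Q ≠ 0)
    (ha : a = th (-1) Q 5 4) (hb : b = th (-1) Q 5 3) (hc : c = th (-1) Q 5 2)
    (hd : d = th (-1) Q 5 1) (he : e = th (-1) Q 5 0) :
    a * c * e ^ 2 + Q * a ^ 2 * c ^ 2 = b ^ 2 * d ^ 2 ∧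
    c ^ 3 * e - Q ^ 2 * a ^ 3 * c = b * d ^ 3 ∧
    a * c ^ 3 + Q * a ^ 3 * e = b ^ 3 * d := by
  have key := fun k l => th_mul_split2 hQ hQ0 (B := 5) (by norm_num) k l
  have hs := fun k => th_shift hQ0 (ε := 1) (by norm_num) 10 k
  have hn := fun k => th_neg Q (ε := 1) (by norm_num) 10 k
  have u12 := hs (-8)
  have u14 := hs (-6)
  have u16 := hs (-4)
  have u18 := hs (-2)
  rw [hn] at u12 u14 u16 u18
  have ee := key 0 0
  have ac := key 4 2
  have bd := key 3 1
  have dd := key 1 1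
  have bb := key 3 3
  have cc := key 2 2
  have aa := key 4 4
  have ce := key 2 0
  have ae := key 4 0
  norm_num at u12 u14 u16 u18 ee ac bd dd bb cc aa ce ae
  simp only [zpow_neg, u12, u14, u16, u18, ← ha, ← hb, ← hc, ← hd, ← he] at *
  generalize th 1 Q 10 0 = U0 at *
  generalize th 1 Q 10 2 = U2 at *
  generalize th 1 Q 10 4 = U4 at *
  generalize th 1 Q 10 6 = U6 at *
  generalize th 1 Q 10 8 = U8 at *
  generalize th 1 Q 10 10 = U10 at *
  refine ⟨?_, ?_, ?_⟩
  · rw [show a * c * e ^ 2 + Q * a ^ 2 * c ^ 2 = (a * c) * (e * e) + Q * ((a * a) * (c * c)) by ring,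
      show b ^ 2 * d ^ 2 = (b * b) * (d * d) by ring, ac, ee, aa, cc, bb, dd]
    field_simp
    ring
  · rw [show c ^ 3 * e - Q ^ 2 * a ^ 3 * c = (c * c) * (c * e) - Q ^ 2 * ((a * a) * (a * c)) by ring,
      show b * d ^ 3 = (b * d) * (d * d) by ring, ac, ce, aa, cc, bd, dd]
    field_simp
    ring
  · rw [show a * c ^ 3 + Q * a ^ 3 * e = (a * c) * (c * c) + Q * ((a * a) * (a * e)) by ring,
      show b ^ 3 * d = (b * d) * (b * b) by ring, ac, ae, aa, cc, bd, bb]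
    field_simp
    ring

/-- The `5`-dissections of the two products of theta functions whose product is, up to a power of
`(q ^ 10; q ^ 10)`, the left side of the theorem. Each component is a single product because the
sublattice of index `5` involved has an orthogonal basis. -/
lemma theta_dissections {q a b c d e : ℂ} (hq : ‖q‖ < 1) (hq0 : q ≠ 0)
    (ha : a = th (-1) (q ^ 5) 5 4) (hb : b = th (-1) (q ^ 5) 5 3) (hc : c = th (-1) (q ^ 5) 5 2)
    (hd : d = th (-1) (q ^ 5) 5 1) (he : e = th (-1) (q ^ 5) 5 0) :
    th (-1) q 5 4 * th (-1) q 5 2 =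
      c * e + q ^ 4 * a * c - q * c ^ 2 - q ^ 3 * a * e - q ^ 7 * a ^ 2 ∧
    th (-1) q 5 2 * th (-1) q 5 1 = d * e - q ^ 6 * a * b - q ^ 4 * a * d - q ^ 3 * b * c := by
  have key := fun k l => th_mul_split5 hq hq0 (B := 5) (by norm_num) k l
  have hs := fun k => th_shift hq0 (ε := -1) (by norm_num) 25 k
  have hn := fun k => th_neg q (ε := -1) (by norm_num) 25 k
  have hp := fun k => th_pow q (-1) 5 5 k
  rw [hp] at ha hb hc hd he
  have v25 := hs (-25)
  have v30 := hs (-20)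
  have v35 := hs (-15)
  have v40 := hs (-10)
  have v45 := hs (-5)
  have v50 := hs 0
  have v60 := hs 10
  have v80 := hs 30
  have k1 := key 4 2
  have k2 := key 2 1
  have n20 := hn 20
  have n40 := hn 40
  have n60 := hn 60
  have n80 := hn 80
  simp only [hn] at v25 v30 v35 v40 v45
  norm_num at ha hb hc hd he v25 v30 v35 v40 v45 v50 v60 v80
  simp only [Fin.sum_univ_five] at k1 k2
  norm_num at k1 k2
  -- The theta function attached to the exponent `25` vanishes by antisymmetry.
  have z25 : th (-1) q 25 25 = 0 := self_eq_neg.mp v25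
  refine ⟨?_, ?_⟩
  · rw [k1, n20, n40, n60, n80, v80, v60, v50, v40, v30, ← ha, ← hc, ← he]
    field_simp
    ring
  · rw [k2, n20, n40, n60, n80, v80, v60, z25, v45, v35, v30, ← ha, ← hb, ← hc, ← hd, ← he]
    field_simp
    ring

/-- The Rogers-Ramanujan products at `q` and `q ^ 2`, rewritten with modulus ten. -/
lemma GG_HH_modulus_ten {q : ℂ} (hq : ‖q‖ < 1) :
    GG q = 1 / (qp (q ^ 1) (q ^ 10) * qp (q ^ 6) (q ^ 10) *
      (qp (q ^ 4) (q ^ 10) * qp (q ^ 9) (q ^ 10))) ∧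
    HH q = 1 / (qp (q ^ 2) (q ^ 10) * qp (q ^ 7) (q ^ 10) *
      (qp (q ^ 3) (q ^ 10) * qp (q ^ 8) (q ^ 10))) ∧
    GG (q ^ 2) = 1 / (qp (q ^ 2) (q ^ 10) * qp (q ^ 8) (q ^ 10)) ∧
    HH (q ^ 2) = 1 / (qp (q ^ 4) (q ^ 10) * qp (q ^ 6) (q ^ 10)) := by
  have h5 : ‖q ^ 5‖ < 1 := by
    rw [norm_pow]; exact pow_lt_one₀ (norm_nonneg _) hq (by norm_num)
  have key : ∀ i, qp (q ^ i) (q ^ 5) = qp (q ^ i) (q ^ 10) * qp (q ^ (i + 5)) (q ^ 10) := by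
    intro i
    rw [qp_split 2 two_pos _ _ h5, Finset.prod_range_succ, Finset.prod_range_one, ← pow_mul,
      ← pow_mul, ← pow_mul, mul_zero, pow_zero, mul_one, mul_one, ← pow_add]
  have k1 := key 1
  rw [pow_one] at k1
  refine ⟨?_, ?_, ?_, ?_⟩
  · rw [GG, k1, key, pow_one]
  · rw [HH, key, key]
  · rw [GG, ← pow_mul, ← pow_mul]
  · rw [HH, ← pow_mul, ← pow_mul, ← pow_mul]

theorem stmt13 (q : ℂ) (hq : ‖q‖ < 1) :
    GG (q ^ 2) ^ 2 / (GG q * HH q ^ 2) =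
      GG (q ^ 5) * GG (q ^ 10) ^ 2 - q * HH (q ^ 5) * GG (q ^ 10) ^ 2 -
        2 * q ^ 3 * HH (q ^ 5) * GG (q ^ 10) * HH (q ^ 10) +
        q ^ 4 * GG (q ^ 5) * HH (q ^ 10) ^ 2 := by
  rcases eq_or_ne q 0 with rfl | hq0
  · simp [GG, HH, qp]
  obtain ⟨Q, hQdef⟩ : ∃ Q, Q = q ^ 5 := ⟨_, rfl⟩
  have hpow : ∀ {x : ℂ}, ‖x‖ < 1 → ∀ n : ℕ, n ≠ 0 → ‖x ^ n‖ < 1 := fun hx n hn => by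
    rw [norm_pow]; exact pow_lt_one₀ (norm_nonneg _) hx hn
  have hQ : ‖Q‖ < 1 := hQdef ▸ hpow hq 5 (by norm_num)
  have hQ0 : Q ≠ 0 := hQdef ▸ pow_ne_zero 5 hq0
  have nz : ∀ {x : ℂ}, ‖x‖ < 1 → ∀ n : ℕ, n ≠ 0 → qp (x ^ n) (x ^ 10) ≠ 0 := fun hx n hn =>
    qp_ne_zero (hpow hx n hn) (hpow hx 10 (by norm_num))
  obtain ⟨a, ha⟩ : ∃ a, a = th (-1) Q 5 4 := ⟨_, rfl⟩
  obtain ⟨b, hb⟩ : ∃ b, b = th (-1) Q 5 3 := ⟨_, rfl⟩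
  obtain ⟨c, hc⟩ : ∃ c, c = th (-1) Q 5 2 := ⟨_, rfl⟩
  obtain ⟨d, hd⟩ : ∃ d, d = th (-1) Q 5 1 := ⟨_, rfl⟩
  obtain ⟨e, he⟩ : ∃ e, e = th (-1) Q 5 0 := ⟨_, rfl⟩
  obtain ⟨R1, R2, R3⟩ := theta_relations hQ hQ0 ha hb hc hd he
  obtain ⟨D1, D2⟩ := theta_dissections hq hq0 (hQdef ▸ ha) (hQdef ▸ hb) (hQdef ▸ hc)
    (hQdef ▸ hd) (hQdef ▸ he)
  -- The left side, in terms of theta functions of `q`.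
  have hL : GG (q ^ 2) ^ 2 / (GG q * HH q ^ 2) * qp (q ^ 10) (q ^ 10) ^ 4 =
      (th (-1) q 5 4 * th (-1) q 5 2) * (th (-1) q 5 2 * th (-1) q 5 1) := by
    obtain ⟨g1, h1, g2, -⟩ := GG_HH_modulus_ten hq
    have t4 := th_prod hq hq0 (B := 5) (k := 4) (m := 9) (l := 1) (by norm_num) rfl rfl
    have t2 := th_prod hq hq0 (B := 5) (k := 2) (m := 7) (l := 3) (by norm_num) rfl rfl
    have t1 := th_prod hq hq0 (B := 5) (k := 1) (m := 6) (l := 4) (by norm_num) rfl rfl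
    norm_num only [Nat.cast_ofNat, Nat.cast_one] at t4 t2 t1
    rw [t4, t2, t1, g1, h1, g2]
    have n1 := nz hq 1 (by norm_num)
    have n2 := nz hq 2 (by norm_num)
    have n3 := nz hq 3 (by norm_num)
    have n4 := nz hq 4 (by norm_num)
    have n6 := nz hq 6 (by norm_num)
    have n7 := nz hq 7 (by norm_num)
    have n8 := nz hq 8 (by norm_num)
    have n9 := nz hq 9 (by norm_num)
    simp only [pow_one] at *
    field_simp
  obtain ⟨g1, h1, g2, h2⟩ := GG_HH_modulus_ten hQ
  have t4 := th_prod hQ hQ0 (B := 5) (k := 4) (m := 9) (l := 1) (by norm_num) rfl rfl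
  have t3 := th_prod hQ hQ0 (B := 5) (k := 3) (m := 8) (l := 2) (by norm_num) rfl rfl
  have t2 := th_prod hQ hQ0 (B := 5) (k := 2) (m := 7) (l := 3) (by norm_num) rfl rfl
  have t1 := th_prod hQ hQ0 (B := 5) (k := 1) (m := 6) (l := 4) (by norm_num) rfl rfl
  norm_num only [Nat.cast_ofNat, Nat.cast_one] at t4 t3 t2 t1
  rw [← ha] at t4
  rw [← hb] at t3
  rw [← hc] at t2
  rw [← hd] at t1
  -- `(q ^ 10; q ^ 10) = (Q ^ 2; Q ^ 2)` splits into five products of modulus ten.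
  have hF : qp (q ^ 10) (q ^ 10) = qp (Q ^ 2) (Q ^ 10) * qp (Q ^ 4) (Q ^ 10) *
      qp (Q ^ 6) (Q ^ 10) * qp (Q ^ 8) (Q ^ 10) * qp (Q ^ 10) (Q ^ 10) := by
    rw [show q ^ 10 = Q ^ 2 by rw [hQdef]; ring,
      qp_split 5 (by norm_num) (Q ^ 2) _ (hpow hQ 2 two_ne_zero)]
    simp only [Finset.prod_range_succ, Finset.prod_range_zero, ← pow_mul, ← pow_add]
    norm_num
  have n1 := nz hQ 1 (by norm_num)
  have n2 := nz hQ 2 (by norm_num)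
  have n3 := nz hQ 3 (by norm_num)
  have n4 := nz hQ 4 (by norm_num)
  have n6 := nz hQ 6 (by norm_num)
  have n7 := nz hQ 7 (by norm_num)
  have n8 := nz hQ 8 (by norm_num)
  have n9 := nz hQ 9 (by norm_num)
  have n10 := nz hQ 10 (by norm_num)
  generalize qp (Q ^ 10) (Q ^ 10) = E at *
  have na : a ≠ 0 := by rw [t4]; exact mul_ne_zero n10 (mul_ne_zero n9 n1)
  have nb : b ≠ 0 := by rw [t3]; exact mul_ne_zero n10 (mul_ne_zero n8 n2)
  have nc : c ≠ 0 := by rw [t2]; exact mul_ne_zero n10 (mul_ne_zero n7 n3)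
  have nd : d ≠ 0 := by rw [t1]; exact mul_ne_zero n10 (mul_ne_zero n6 n4)
  have hF' : qp (q ^ 10) (q ^ 10) = b * d / E := by
    rw [hF, t3, t1]; field_simp
  have g1' : GG Q = E ^ 2 / (a * d) := by
    rw [g1, t4, t1]; field_simp
  have h1' : HH Q = E ^ 2 / (b * c) := by
    rw [h1, t3, t2]; field_simp
  have g2' : GG (Q ^ 2) = E / b := by
    rw [g2, t3]; field_simp
  have h2' : HH (Q ^ 2) = E / d := by
    rw [h2, t1]; field_simp
  rw [D1, D2, hF'] at hL
  rw [← hQdef, show q ^ 10 = Q ^ 2 by rw [hQdef]; ring, g1', h1', g2', h2']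
  have hbd : (b * d / E) ^ 4 ≠ 0 := pow_ne_zero _ (div_ne_zero (mul_ne_zero nb nd) n10)
  refine mul_right_cancel₀ hbd (hL.trans ?_)
  clear hL D1 D2 t1 t2 t3 t4 g1 h1 g2 h2 g1' h1' g2' h2' hF hF' hbd ha hb hc hd he
  rw [hQdef] at R1 R2 R3
  -- Comparing coefficients in `q` modulo `5` leaves exactly the three theta relations.
  field_simp
  linear_combination (c * d - q ^ 3 * a * d) * R1 - (q * a * d + q ^ 3 * a * b) * R2
    + q ^ 4 * b * c * R3
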